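/- Let W, Z₁,…,Z_{k+1} be finite-valued random variables such that Z₁,…,Z_{k+1} are conditionally i.i.d. given W (i.e., exchangeable and conditionally independent with identical conditional laws given W). Then I(W; Z_{k+1} | Z₁,…,Z_k) = I(W; Z_k | Z₁,…,Z_{k-1}) - I(Z_{k+1}; Z_k | Z₁,…,Z_{k-1}). -/

import Mathlib

open Finset

/-- Probability that a finite-valued random variable `X` on the finite
sample space `Ω` (with pmf `p`) takes the value `x`. -/
noncomputable def probOf {Ω α : Type*} [Fintype Ω] [DecidableEq α]
    (p : Ω → ℝ) (X : Ω → α) (x : α) : ℝ :=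
  ∑ ω, if X ω = x then p ω else 0

/-- Shannon entropy (natural logarithm) of a finite-valued random variable. -/
noncomputable def entropy {Ω α : Type*} [Fintype Ω] [Fintype α] [DecidableEq α]
    (p : Ω → ℝ) (X : Ω → α) : ℝ :=
  -∑ x, probOf p X x * Real.log (probOf p X x)

/-- Conditional Shannon entropy `H(X | Y)`. -/
noncomputable def condEntropy {Ω α β : Type*} [Fintype Ω] [Fintype α] [DecidableEq α]
    [Fintype β] [DecidableEq β] (p : Ω → ℝ) (X : Ω → α) (Y : Ω → β) : ℝ :=
  entropy p (fun ω => (X ω, Y ω)) - entropy p Y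

/-- Mutual information `I(X; Y)`. -/
noncomputable def mutualInfo {Ω α β : Type*} [Fintype Ω] [Fintype α] [DecidableEq α]
    [Fintype β] [DecidableEq β] (p : Ω → ℝ) (X : Ω → α) (Y : Ω → β) : ℝ :=
  entropy p X + entropy p Y - entropy p (fun ω => (X ω, Y ω))

/-- Conditional mutual information `I(X; Y | Z)`. -/
noncomputable def condMI {Ω α β γ : Type*} [Fintype Ω] [Fintype α] [DecidableEq α]
    [Fintype β] [DecidableEq β] [Fintype γ] [DecidableEq γ]
    (p : Ω → ℝ) (X : Ω → α) (Y : Ω → β) (Z : Ω → γ) : ℝ :=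
  condEntropy p X Z + condEntropy p Y Z - condEntropy p (fun ω => (X ω, Y ω)) Z

/-- `p` is a probability mass function. -/
def IsPMF {Ω : Type*} [Fintype Ω] (p : Ω → ℝ) : Prop :=
  (∀ ω, 0 ≤ p ω) ∧ ∑ ω, p ω = 1

/-!
Write `A = Z_{k+1}`, `B = Z_k`, `C = (Z_1, …, Z_{k-1})`. Expanding `I(A; W, B | C)` by the chain
rule in both orders gives `I(W; A | B, C) + I(A; B | C) = I(W; A | C) + I(A; B | W, C)`. Conditional
independence kills the last term, and since `A` and `B` have the same law jointly with `(W, C)`,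
`I(W; A | C) = I(W; B | C)`.
-/

section RandomVariables

variable {Ω Ω' α β γ δ : Type*} [Fintype Ω] [Fintype Ω'] [DecidableEq α] [DecidableEq β]
  [DecidableEq γ] [DecidableEq δ]

lemma probOf_apply_of_injective (p : Ω → ℝ) {X : Ω → α} (hX : Function.Injective X) (ω : Ω) :
    probOf p X (X ω) = p ω := by
  classical
  simp [probOf, hX.eq_iff]

lemma le_probOf_apply {p : Ω → ℝ} (hp : ∀ ω, 0 ≤ p ω) (X : Ω → α) (ω : Ω) :
    p ω ≤ probOf p X (X ω) := by
  have hterm : ∀ ω' ∈ univ, 0 ≤ if X ω' = X ω then p ω' else 0 := fun ω' _ => by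
    split_ifs <;> simp [hp]
  simpa [probOf] using single_le_sum hterm (mem_univ ω)

lemma probOf_comp [Fintype α] (p : Ω → ℝ) (X : Ω → α) (f : α → β) (y : β) :
    probOf p (fun ω => f (X ω)) y = ∑ x, if f x = y then probOf p X x else 0 := by
  simp only [probOf, ← sum_filter]
  rw [sum_comm' (t' := univ.filter fun ω => f (X ω) = y) (s' := fun ω => {X ω}) (by aesop)]
  simp

lemma probOf_eq_sum_prodMk [Fintype α] (p : Ω → ℝ) (X : Ω → α) (Y : Ω → β) (y : β) :
    probOf p Y y = ∑ x, probOf p (fun ω => (X ω, Y ω)) (x, y) := by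
  simp only [probOf, Prod.mk.injEq, ite_and]
  rw [sum_comm]
  simp

lemma probOf_prodMk_left_comm (p : Ω → ℝ) (X : Ω → α) (Y : Ω → β) (Z : Ω → γ) (x : α) (y : β)
    (z : γ) :
    probOf p (fun ω => (X ω, Y ω, Z ω)) (x, y, z) =
      probOf p (fun ω => (Y ω, X ω, Z ω)) (y, x, z) := by
  simp only [probOf, Prod.mk.injEq, and_left_comm]

lemma probOf_prodMk_eq_of_exchangeable [Finite α] {p : Ω → ℝ} {X Y : Ω → α} {Z : Ω → γ}
    (h : ∀ x y z, probOf p (fun ω => (X ω, Y ω, Z ω)) (x, y, z) =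
      probOf p (fun ω => (X ω, Y ω, Z ω)) (y, x, z)) :
    probOf p (fun ω => (X ω, Z ω)) = probOf p (fun ω => (Y ω, Z ω)) := by
  cases nonempty_fintype α
  ext ⟨x, z⟩
  rw [probOf_eq_sum_prodMk p Y, probOf_eq_sum_prodMk p X]
  exact sum_congr rfl fun y _ => by rw [probOf_prodMk_left_comm, h]

/-- Conditional independence of `X` and `Y` given `Z`, in the division-free form
`P(x, y, z) P(z) = P(x, z) P(y, z)`, which says nothing about values `z` of probability zero. -/
def IsCondIndep (p : Ω → ℝ) (X : Ω → α) (Y : Ω → β) (Z : Ω → γ) : Prop :=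
  ∀ x y z, probOf p (fun ω => (X ω, Y ω, Z ω)) (x, y, z) * probOf p Z z =
    probOf p (fun ω => (X ω, Z ω)) (x, z) * probOf p (fun ω => (Y ω, Z ω)) (y, z)

lemma isCondIndep_of_factorization [Finite α] [Finite β] {p : Ω → ℝ} {X : Ω → α} {Y : Ω → β}
    {Z : Ω → γ} (f : α → γ → ℝ) (g : β → γ → ℝ)
    (h : ∀ x y z, probOf p (fun ω => (X ω, Y ω, Z ω)) (x, y, z) = f x z * g y z) :
    IsCondIndep p X Y Z := by
  cases nonempty_fintype α
  cases nonempty_fintype β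
  intro x y z
  have hXZ (x : α) : probOf p (fun ω => (X ω, Z ω)) (x, z) = f x z * ∑ y, g y z := by
    rw [probOf_eq_sum_prodMk p Y, mul_sum]
    exact sum_congr rfl fun y _ => by rw [probOf_prodMk_left_comm, h]
  have hYZ : probOf p (fun ω => (Y ω, Z ω)) (y, z) = (∑ x, f x z) * g y z := by
    rw [probOf_eq_sum_prodMk p X, sum_mul]
    exact sum_congr rfl fun x _ => h x y z
  have hZ : probOf p Z z = (∑ x, f x z) * ∑ y, g y z := by
    rw [probOf_eq_sum_prodMk p X, sum_mul]
    exact sum_congr rfl fun x _ => hXZ x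
  rw [h, hXZ, hYZ, hZ]
  ring

lemma entropy_comp_congr [Finite α] [Fintype β] {p : Ω → ℝ} {p' : Ω' → ℝ} {X : Ω → α}
    {X' : Ω' → α} (h : probOf p X = probOf p' X') (f : α → β) :
    entropy p (fun ω => f (X ω)) = entropy p' (fun ω => f (X' ω)) := by
  cases nonempty_fintype α
  simp only [entropy, probOf_comp, h]

variable [Fintype α] [Fintype β] [Fintype γ] [Fintype δ]

lemma entropy_eq_neg_sum_mul_log (p : Ω → ℝ) (X : Ω → α) :
    entropy p X = -∑ ω, p ω * Real.log (probOf p X (X ω)) := by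
  have hsum (L : α → ℝ) : ∑ x, probOf p X x * L x = ∑ ω, p ω * L (X ω) := by
    simp only [probOf, sum_mul, ite_mul, zero_mul]
    rw [sum_comm]
    simp
  rw [entropy, hsum]

lemma entropy_congr_of_eq_iff (p : Ω → ℝ) {X : Ω → α} {Y : Ω → β}
    (h : ∀ ω ω', X ω = X ω' ↔ Y ω = Y ω') : entropy p X = entropy p Y := by
  simp only [entropy_eq_neg_sum_mul_log, probOf, h]

lemma condMI_congr_of_probOf_eq {p : Ω → ℝ} {p' : Ω' → ℝ} {X : Ω → α} {X' : Ω' → α}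
    {Y : Ω → β} {Y' : Ω' → β} {Z : Ω → γ} {Z' : Ω' → γ}
    (h : probOf p (fun ω => (X ω, Y ω, Z ω)) = probOf p' (fun ω => (X' ω, Y' ω, Z' ω))) :
    condMI p X Y Z = condMI p' X' Y' Z' := by
  have hXZ := entropy_comp_congr h fun t => (t.1, t.2.2)
  have hYZ := entropy_comp_congr h fun t => t.2
  have hZ := entropy_comp_congr h fun t => t.2.2
  have hXYZ := entropy_comp_congr h fun t => ((t.1, t.2.1), t.2.2)
  simp only [condMI, condEntropy, hXZ, hYZ, hZ, hXYZ]

lemma condEntropy_congr_right (p : Ω → ℝ) (X : Ω → α) {Z : Ω → γ} {Z' : Ω → δ}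
    (h : ∀ ω ω', Z ω = Z ω' ↔ Z' ω = Z' ω') : condEntropy p X Z = condEntropy p X Z' := by
  have hpair : entropy p (fun ω => (X ω, Z ω)) = entropy p (fun ω => (X ω, Z' ω)) :=
    entropy_congr_of_eq_iff p fun ω ω' => by simp only [Prod.mk.injEq, h]
  rw [condEntropy, condEntropy, hpair, entropy_congr_of_eq_iff p h]

lemma condMI_congr_right (p : Ω → ℝ) (X : Ω → α) (Y : Ω → β) {Z : Ω → γ} {Z' : Ω → δ}
    (h : ∀ ω ω', Z ω = Z ω' ↔ Z' ω = Z' ω') : condMI p X Y Z = condMI p X Y Z' := by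
  simp only [condMI, condEntropy_congr_right p _ h]

lemma condMI_prodMk_add_condMI (p : Ω → ℝ) (W : Ω → α) (A : Ω → β) (B : Ω → γ) (C : Ω → δ) :
    condMI p W A (fun ω => (B ω, C ω)) + condMI p A B C =
      condMI p W A C + condMI p A B (fun ω => (W ω, C ω)) := by
  have hWBC : entropy p (fun ω => (W ω, B ω, C ω)) = entropy p (fun ω => (B ω, W ω, C ω)) :=
    entropy_congr_of_eq_iff p fun ω ω' => by grind
  have hABC : entropy p (fun ω => (A ω, B ω, C ω)) = entropy p (fun ω => ((A ω, B ω), C ω)) :=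
    entropy_congr_of_eq_iff p fun ω ω' => by grind
  have hWAC : entropy p (fun ω => ((W ω, A ω), C ω)) = entropy p (fun ω => (A ω, W ω, C ω)) :=
    entropy_congr_of_eq_iff p fun ω ω' => by grind
  have hWABC : entropy p (fun ω => ((W ω, A ω), B ω, C ω)) =
      entropy p (fun ω => ((A ω, B ω), W ω, C ω)) :=
    entropy_congr_of_eq_iff p fun ω ω' => by grind
  simp only [condMI, condEntropy, hWBC, hABC, hWAC, hWABC]
  ring

lemma IsCondIndep.condMI_eq_zero {p : Ω → ℝ} (hp : ∀ ω, 0 ≤ p ω) {X : Ω → α} {Y : Ω → β}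
    {Z : Ω → γ} (h : IsCondIndep p X Y Z) : condMI p X Y Z = 0 := by
  have hassoc : entropy p (fun ω => ((X ω, Y ω), Z ω)) = entropy p (fun ω => (X ω, Y ω, Z ω)) :=
    entropy_congr_of_eq_iff p fun ω ω' => by simp only [Prod.mk.injEq, and_assoc]
  have hlog (ω : Ω) :
      p ω * Real.log (probOf p (fun ω => (X ω, Y ω, Z ω)) (X ω, Y ω, Z ω)) +
          p ω * Real.log (probOf p Z (Z ω)) =
        p ω * Real.log (probOf p (fun ω => (X ω, Z ω)) (X ω, Z ω)) +
          p ω * Real.log (probOf p (fun ω => (Y ω, Z ω)) (Y ω, Z ω)) := by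
    rcases (hp ω).eq_or_lt with hω | hω
    · simp [← hω]
    · have hXYZ := hω.trans_le (le_probOf_apply hp (fun ω => (X ω, Y ω, Z ω)) ω)
      have hZ := hω.trans_le (le_probOf_apply hp Z ω)
      have hXZ := hω.trans_le (le_probOf_apply hp (fun ω => (X ω, Z ω)) ω)
      have hYZ := hω.trans_le (le_probOf_apply hp (fun ω => (Y ω, Z ω)) ω)
      rw [← mul_add, ← mul_add, ← Real.log_mul hXYZ.ne' hZ.ne', ← Real.log_mul hXZ.ne' hYZ.ne', h]
  have hsum := sum_congr rfl fun ω (_ : ω ∈ univ) => hlog ω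
  simp only [sum_add_distrib] at hsum
  simp only [condMI, condEntropy, hassoc, entropy_eq_neg_sum_mul_log]
  linarith

lemma IsCondIndep.condMI_prodMk_eq_sub {p : Ω → ℝ} (hp : ∀ ω, 0 ≤ p ω) {W : Ω → α}
    {A B : Ω → β} {C : Ω → γ} (hindep : IsCondIndep p A B (fun ω => (W ω, C ω)))
    (hident : probOf p (fun ω => (A ω, W ω, C ω)) = probOf p (fun ω => (B ω, W ω, C ω))) :
    condMI p W A (fun ω => (B ω, C ω)) = condMI p W B C - condMI p A B C := by
  have hWA : condMI p W A C = condMI p W B C :=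
    condMI_congr_of_probOf_eq <| by
      ext ⟨w, a, c⟩
      rw [probOf_prodMk_left_comm, hident, probOf_prodMk_left_comm]
  linarith [condMI_prodMk_add_condMI p W A B C, hindep.condMI_eq_zero hp]

-- The paper's `k` is `n + 1` here: `Fin.init (Z ω)` is `Z^k`, `Fin.init (Fin.init (Z ω))` is
-- `Z^{k-1}`.
theorem condMI_recursion_general {n : ℕ} {p : Ω → ℝ} (hp : ∀ ω, 0 ≤ p ω) (W : Ω → α)
    (Z : Ω → Fin (n + 2) → β)
    (hindep : IsCondIndep p (fun ω => Z ω (Fin.last (n + 1))) (fun ω => Z ω (Fin.last n).castSucc)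
      (fun ω => (W ω, Fin.init (Fin.init (Z ω)))))
    (hident : probOf p (fun ω => (Z ω (Fin.last (n + 1)), W ω, Fin.init (Fin.init (Z ω)))) =
      probOf p (fun ω => (Z ω (Fin.last n).castSucc, W ω, Fin.init (Fin.init (Z ω))))) :
    condMI p W (fun ω => Z ω (Fin.last (n + 1))) (fun ω => Fin.init (Z ω)) =
      condMI p W (fun ω => Z ω (Fin.last n).castSucc) (fun ω => Fin.init (Fin.init (Z ω))) -
        condMI p (fun ω => Z ω (Fin.last (n + 1))) (fun ω => Z ω (Fin.last n).castSucc)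
          (fun ω => Fin.init (Fin.init (Z ω))) := by
  rw [← hindep.condMI_prodMk_eq_sub hp hident]
  refine condMI_congr_right p _ _ fun ω ω' => ?_
  simp only [funext_iff, Prod.mk.injEq, Fin.forall_fin_succ', Fin.init, and_comm]

end RandomVariables

section CondIIDLaw

variable {𝓦 𝓩 : Type*}

/-- The joint law `π(w) ∏ᵢ q(zᵢ | w)` of `W` and `n` draws that are i.i.d. given `W`, on the
sample space of all outcomes, where `W` and the draws are the coordinates. -/
noncomputable def condIIDLaw (π : 𝓦 → ℝ) (q : 𝓦 → 𝓩 → ℝ) (n : ℕ) : 𝓦 × (Fin n → 𝓩) → ℝ :=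
  fun ωf => π ωf.1 * ∏ i, q ωf.1 (ωf.2 i)

lemma condIIDLaw_nonneg {π : 𝓦 → ℝ} {q : 𝓦 → 𝓩 → ℝ} (hπ : ∀ w, 0 ≤ π w)
    (hq : ∀ w z, 0 ≤ q w z) (n : ℕ) (ωf : 𝓦 × (Fin n → 𝓩)) : 0 ≤ condIIDLaw π q n ωf :=
  mul_nonneg (hπ _) (prod_nonneg fun _ _ => hq _ _)

lemma condIIDLaw_snoc (π : 𝓦 → ℝ) (q : 𝓦 → 𝓩 → ℝ) {n : ℕ} (w : 𝓦) (z : Fin n → 𝓩) (a : 𝓩) :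
    condIIDLaw π q (n + 1) (w, Fin.snoc (α := fun _ => 𝓩) z a) =
      condIIDLaw π q n (w, z) * q w a := by
  simp [condIIDLaw, Fin.prod_univ_castSucc, mul_assoc]

variable [Fintype 𝓦] [DecidableEq 𝓦] [Fintype 𝓩] [DecidableEq 𝓩]

lemma probOf_condIIDLaw_last_two (π : 𝓦 → ℝ) (q : 𝓦 → 𝓩 → ℝ) {n : ℕ} (a b : 𝓩)
    (s : 𝓦 × (Fin n → 𝓩)) :
    probOf (condIIDLaw π q (n + 2)) (fun ωf => (ωf.2 (Fin.last (n + 1)),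
        ωf.2 (Fin.last n).castSucc, ωf.1, Fin.init (Fin.init ωf.2))) (a, b, s) =
      condIIDLaw π q n s * q s.1 b * q s.1 a := by
  obtain ⟨w, z⟩ := s
  have hinj : Function.Injective fun ωf : 𝓦 × (Fin (n + 2) → 𝓩) => (ωf.2 (Fin.last (n + 1)),
      ωf.2 (Fin.last n).castSucc, ωf.1, Fin.init (Fin.init ωf.2)) := by
    rintro ⟨w, z⟩ ⟨w', z'⟩ h
    simp only [Prod.mk.injEq, funext_iff, Fin.init] at h
    simp only [Prod.mk.injEq, funext_iff, Fin.forall_fin_succ']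
    exact ⟨h.2.2.1, ⟨h.2.2.2, h.2.1⟩, h.1⟩
  rw [← condIIDLaw_snoc, ← condIIDLaw_snoc, ← probOf_apply_of_injective (condIIDLaw π q _) hinj]
  simp

lemma isCondIndep_condIIDLaw_last_two (π : 𝓦 → ℝ) (q : 𝓦 → 𝓩 → ℝ) (n : ℕ) :
    IsCondIndep (condIIDLaw π q (n + 2)) (fun ωf => ωf.2 (Fin.last (n + 1)))
      (fun ωf => ωf.2 (Fin.last n).castSucc) (fun ωf => (ωf.1, Fin.init (Fin.init ωf.2))) :=
  isCondIndep_of_factorization (fun a s => q s.1 a) (fun b s => condIIDLaw π q n s * q s.1 b)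
    fun a b s => by rw [probOf_condIIDLaw_last_two, mul_comm]

lemma probOf_condIIDLaw_last_eq (π : 𝓦 → ℝ) (q : 𝓦 → 𝓩 → ℝ) (n : ℕ) :
    probOf (condIIDLaw π q (n + 2))
        (fun ωf => (ωf.2 (Fin.last (n + 1)), ωf.1, Fin.init (Fin.init ωf.2))) =
      probOf (condIIDLaw π q (n + 2))
        (fun ωf => (ωf.2 (Fin.last n).castSucc, ωf.1, Fin.init (Fin.init ωf.2))) :=
  probOf_prodMk_eq_of_exchangeable fun a b s => by
    rw [probOf_condIIDLaw_last_two, probOf_condIIDLaw_last_two, mul_right_comm]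

end CondIIDLaw

/-- MI recursion (Lemma 3): under the joint law `p(w) ∏_{i=1}^{k+1} p(zᵢ|w)`,
`I(W; Z_{k+1} | Z^k) = I(W; Z_k | Z^{k-1}) - I(Z_{k+1}; Z_k | Z^{k-1})`. -/
theorem condMI_recursion {𝓦 𝓩 : Type*} [Fintype 𝓦] [DecidableEq 𝓦] [Fintype 𝓩] [DecidableEq 𝓩]
    (k : ℕ) (hk : 1 ≤ k) (π : 𝓦 → ℝ) (q : 𝓦 → 𝓩 → ℝ)
    (hπ : IsPMF π) (hq : ∀ w, IsPMF (q w))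
    (p : 𝓦 × (Fin (k + 1) → 𝓩) → ℝ)
    (hp : p = fun ωf => π ωf.1 * ∏ i, q ωf.1 (ωf.2 i)) :
    condMI p (fun ωf => ωf.1) (fun ωf => ωf.2 (Fin.last k))
        (fun ωf => fun i : Fin k => ωf.2 ⟨i, by omega⟩)
      = condMI p (fun ωf => ωf.1) (fun ωf => ωf.2 ⟨k - 1, by omega⟩)
          (fun ωf => fun i : Fin (k - 1) => ωf.2 ⟨i, by omega⟩)
        - condMI p (fun ωf => ωf.2 (Fin.last k)) (fun ωf => ωf.2 ⟨k - 1, by omega⟩)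
            (fun ωf => fun i : Fin (k - 1) => ωf.2 ⟨i, by omega⟩) := by
  obtain ⟨n, rfl⟩ := Nat.exists_eq_add_of_le' hk
  subst hp
  exact condMI_recursion_general (condIIDLaw_nonneg hπ.1 (fun w => (hq w).1) (n + 2)) Prod.fst
    Prod.snd (isCondIndep_condIIDLaw_last_two π q n) (probOf_condIIDLaw_last_eq π q n)
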